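/- arXiv:1811.09200 — 6 statements merged into one kernel-verified Lean document; each statement's English description precedes it below -/
import Mathlib

section
/- Let f : X → Y be a continuous surjection of compact Hausdorff spaces. Then f is fully closed if and only if for each subset A ⊆ Y the quotient space Y_A is Hausdorff. -/
open Set Metric Topology Filter

/-- A continuous map of compacts is fully closed if images of disjoint closed sets
have finite intersection. -/
def FullyClosed {X Y : Type*} [TopologicalSpace X] [TopologicalSpace Y] (f : X → Y) : Prop :=
  ∀ A B : Set X, IsClosed A → IsClosed B → Disjoint A B → (f '' A ∩ f '' B).Finite

/-- The equivalence relation on `X` identifying `x` and `x'` whenever `f x = f x' ∉ A`.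
The quotient `Y_A` is `Quotient (fiberSetoid f A)`. -/
def fiberSetoid {X Y : Type*} (f : X → Y) (A : Set Y) : Setoid X where
  r x x' := x = x' ∨ (f x = f x' ∧ f x ∉ A)
  iseqv := by
    constructor
    · intro x; exact Or.inl rfl
    · rintro x y (rfl | ⟨e, hA⟩)
      · exact Or.inl rfl
      · exact Or.inr ⟨e.symm, e ▸ hA⟩
    · rintro x y z (rfl | ⟨e1, h1⟩) h2
      · exact h2
      · rcases h2 with rfl | ⟨e2, _⟩
        · exact Or.inr ⟨e1, h1⟩
        · exact Or.inr ⟨e1.trans e2, h1⟩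

/-!
Let `q : X → Y_A` be the quotient map. For closed `C ⊆ X`, its saturation is
`C ∪ f⁻¹(f(C) ∖ A)`. If `f` is fully closed, this set is closed: a point outside it has a closed
neighbourhood `K` missing `C`, and it suffices to remove from `K` the fibres over the finite set
`(f(K) ∩ f(C)) ∖ A`. Hence `q` is a closed map, and closed continuous images of `T₄` spaces are
`T₄`.

Conversely, for disjoint closed `B` and `C`, the set `(f(B) ∩ f(C)) ∖ A` is the image in `Y` of
`q(B) ∩ q(C)`, so it is compact when `Y_A` is Hausdorff. Taking `A = {y}` for each `y`, one sees
that the compact set `f(B) ∩ f(C)` is discrete, hence finite.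
-/

section ClosedImage

variable {X Z : Type*} [TopologicalSpace X] [TopologicalSpace Z] {g : X → Z}

theorem t1Space_of_isClosedMap [T1Space X] (hg : IsClosedMap g) (hsurj : Function.Surjective g) :
    T1Space Z where
  t1 := hsurj.forall.2 fun x => by
    simpa only [image_singleton] using hg {x} isClosed_singleton

theorem normalSpace_of_isClosedMap [NormalSpace X] (hcont : Continuous g) (hg : IsClosedMap g)
    (hsurj : Function.Surjective g) : NormalSpace Z where
  normal s t hs ht hst := by
    obtain ⟨U, V, hU, hV, hsU, htV, hUV⟩ :=
      normal_separation (hs.preimage hcont) (ht.preimage hcont) (hst.preimage g)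
    have isOpen_kernImage : ∀ W, IsOpen W → IsOpen (kernImage g W) :=
      fun _ => isClosedMap_iff_kernImage.1 hg
    refine ⟨kernImage g U, kernImage g V, isOpen_kernImage U hU, isOpen_kernImage V hV,
      subset_kernImage_iff.2 hsU, subset_kernImage_iff.2 htV, ?_⟩
    refine disjoint_left.2 (hsurj.forall.2 fun x hxU hxV => ?_)
    exact disjoint_left.1 hUV (hxU rfl) (hxV rfl)

theorem t4Space_of_isClosedMap [T4Space X] (hcont : Continuous g) (hg : IsClosedMap g)
    (hsurj : Function.Surjective g) : T4Space Z where
  toT1Space := t1Space_of_isClosedMap hg hsurj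
  toNormalSpace := normalSpace_of_isClosedMap hcont hg hsurj

end ClosedImage

theorem finite_of_isCompact_of_isClosed_sdiff_singleton {Y : Type*} [TopologicalSpace Y] {s : Set Y}
    (hs : IsCompact s) (h : ∀ y ∈ s, IsClosed (s \ {y})) : s.Finite := by
  refine hs.finite (isDiscrete_iff_forall_mem_exists_isOpen.2 fun y hy => ?_)
  refine ⟨(s \ {y})ᶜ, (h y hy).isOpen_compl, ?_⟩
  ext z
  grind

namespace fiberSetoid

variable {X Y : Type*} {f : X → Y} {A : Set Y}

theorem mk_eq_mk {x x' : X} :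
    Quotient.mk (fiberSetoid f A) x = Quotient.mk (fiberSetoid f A) x' ↔
      x = x' ∨ (f x = f x' ∧ f x ∉ A) :=
  Quotient.eq

theorem preimage_image_mk (C : Set X) :
    Quotient.mk (fiberSetoid f A) ⁻¹' (Quotient.mk (fiberSetoid f A) '' C) =
      C ∪ f ⁻¹' (f '' C \ A) := by
  ext x
  simp only [mem_preimage, mem_image, mem_union, Set.mem_sdiff, mk_eq_mk]
  grind

variable (f A) in
/-- The projection `Y_A → Y` induced by `f`, i.e. the map `π` with `π ∘ f_A = f`. -/
def proj : Quotient (fiberSetoid f A) → Y :=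
  Quotient.lift f fun _ _ h => h.elim (congrArg f) And.left

theorem image_proj_image_mk_inter_image_mk {B C : Set X} (hBC : Disjoint B C) :
    proj f A '' (Quotient.mk (fiberSetoid f A) '' B ∩ Quotient.mk (fiberSetoid f A) '' C) =
      (f '' B ∩ f '' C) \ A := by
  ext y
  constructor
  · rintro ⟨_, ⟨⟨b, hb, rfl⟩, c, hc, hcb⟩, rfl⟩
    obtain rfl | ⟨hfbc, hbA⟩ := mk_eq_mk.1 hcb.symm
    · exact (disjoint_left.1 hBC hb hc).elim
    · exact ⟨⟨⟨b, hb, rfl⟩, c, hc, hfbc.symm⟩, hbA⟩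
  · rintro ⟨⟨⟨b, hb, rfl⟩, c, hc, hfcb⟩, hbA⟩
    exact ⟨_, ⟨⟨b, hb, rfl⟩, c, hc, mk_eq_mk.2 (.inr ⟨hfcb, hfcb ▸ hbA⟩)⟩, rfl⟩

variable [TopologicalSpace X] [TopologicalSpace Y]

theorem continuous_proj (hf : Continuous f) : Continuous (proj f A) :=
  hf.quotient_lift _

theorem isCompact_image_inter_image_sdiff (hf : Continuous f)
    [T2Space (Quotient (fiberSetoid f A))] {B C : Set X} (hB : IsCompact B) (hC : IsCompact C)
    (hBC : Disjoint B C) : IsCompact ((f '' B ∩ f '' C) \ A) := by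
  rw [← image_proj_image_mk_inter_image_mk hBC]
  exact ((hB.image continuous_quotient_mk').inter (hC.image continuous_quotient_mk')).image
    (continuous_proj hf)

end fiberSetoid

namespace FullyClosed

variable {X Y : Type*} [TopologicalSpace X] [TopologicalSpace Y] {f : X → Y}

theorem isClosed_union_preimage_image_sdiff [RegularSpace X] [T1Space Y] (h : FullyClosed f)
    (hf : Continuous f) (A : Set Y) {C : Set X} (hC : IsClosed C) :
    IsClosed (C ∪ f ⁻¹' (f '' C \ A)) := by
  rw [← isOpen_compl_iff, isOpen_iff_mem_nhds]
  intro x hx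
  obtain ⟨hxC, hxA⟩ := not_or.1 hx
  obtain ⟨K, hKx, hK, hKC⟩ := exists_mem_nhds_isClosed_subset (hC.isOpen_compl.mem_nhds hxC)
  have hfin : ((f '' K ∩ f '' C) \ A).Finite :=
    (h K C hK hC (subset_compl_iff_disjoint_right.1 hKC)).sdiff
  have hfibres : (f ⁻¹' ((f '' K ∩ f '' C) \ A))ᶜ ∈ 𝓝 x :=
    (hfin.isClosed.preimage hf).isOpen_compl.mem_nhds fun hx' => hxA ⟨hx'.1.2, hx'.2⟩
  filter_upwards [hKx, hfibres] with z hzK hz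
  rintro (hzC | ⟨hzC, hzA⟩)
  · exact hKC hzK hzC
  · exact hz ⟨⟨mem_image_of_mem f hzK, hzC⟩, hzA⟩

theorem isClosedMap_mk [RegularSpace X] [T1Space Y] (h : FullyClosed f) (hf : Continuous f)
    (A : Set Y) : IsClosedMap (Quotient.mk (fiberSetoid f A)) := by
  intro C hC
  refine isQuotientMap_quotient_mk'.isClosed_preimage.1 ?_
  have hsat := h.isClosed_union_preimage_image_sdiff hf A hC
  rwa [← fiberSetoid.preimage_image_mk] at hsat

theorem t4Space_quotient [T4Space X] [T1Space Y] (h : FullyClosed f) (hf : Continuous f)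
    (A : Set Y) : T4Space (Quotient (fiberSetoid f A)) :=
  t4Space_of_isClosedMap continuous_quotient_mk' (h.isClosedMap_mk hf A) Quotient.mk_surjective

theorem of_t2Space_quotient_singleton [CompactSpace X] [T2Space Y] (hf : Continuous f)
    (h : ∀ y, T2Space (Quotient (fiberSetoid f {y}))) : FullyClosed f := by
  intro B C hB hC hBC
  refine finite_of_isCompact_of_isClosed_sdiff_singleton
    ((hB.isCompact.image hf).inter (hC.isCompact.image hf)) fun y _ => ?_
  have := h y
  exact (fiberSetoid.isCompact_image_inter_image_sdiff hf hB.isCompact hC.isCompact hBC).isClosed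

end FullyClosed

theorem fullyClosed_iff_quotients_t2_general {X Y : Type*} [TopologicalSpace X] [CompactSpace X]
    [T2Space X] [TopologicalSpace Y] [T2Space Y] {f : X → Y} (hf : Continuous f) :
    List.TFAE [FullyClosed f,
      ∀ A : Set Y, T2Space (Quotient (fiberSetoid f A)),
      ∀ y : Y, T2Space (Quotient (fiberSetoid f {y}))] := by
  tfae_have 1 → 2 := fun h A =>
    have := h.t4Space_quotient hf A
    inferInstance
  tfae_have 2 → 3 := fun h y => h {y}
  tfae_have 3 → 1 := FullyClosed.of_t2Space_quotient_singleton hf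
  tfae_finish

/-- Proposition 2.2: `f` is fully closed iff all the quotients `Y_A`
are Hausdorff. -/
theorem fullyClosed_iff_quotients_t2
    {X Y : Type*} [TopologicalSpace X] [CompactSpace X] [T2Space X]
    [TopologicalSpace Y] [CompactSpace Y] [T2Space Y]
    (f : X → Y) (hf : Continuous f) (hsurj : Function.Surjective f) :
    FullyClosed f ↔ ∀ A : Set Y, T2Space (Quotient (fiberSetoid f A)) :=
  (fullyClosed_iff_quotients_t2_general hf).out 0 1
end

section
/- Let f : X → Y be a fully closed continuous surjection of a compact Hausdorff space X onto a metrizable compact space Y such that every fiber f⁻¹(y), y ∈ Y, is metrizable. Then X is metrizable if and only if the set of nontrivial fibers of f (that is, the set of points y ∈ Y for which f⁻¹(y) is not a singleton) is countable. -/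
open Set Metric Topology Filter

/-!
If `X` has a countable basis, each nontrivial fiber contains two points of basic open sets with
disjoint closures, so it lies over one of the countably many intersections
`f '' closure U ∩ f '' closure V`, each finite because `f` is fully closed. Conversely, a metrizable
fiber embeds into the Hilbert cube, and Tietze extends the embedding to all of `X`. Countably many
such extensions, together with `f`, map the compact space `X` injectively into a metrizable product.
-/

section

open TopologicalSpace

theorem exists_countable_disjoint_closed_pairs_separating (X : Type*) [TopologicalSpace X]
    [T25Space X] [SecondCountableTopology X] :
    ∃ P : Set (Set X × Set X), P.Countable ∧
      (∀ p ∈ P, IsClosed p.1 ∧ IsClosed p.2 ∧ Disjoint p.1 p.2) ∧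
      ∀ x y, x ≠ y → ∃ p ∈ P, x ∈ p.1 ∧ y ∈ p.2 := by
  let b := countableBasis X
  let P := {p ∈ (b ×ˢ b).image (Prod.map closure closure) | Disjoint p.1 p.2}
  have hb : IsTopologicalBasis b := isBasis_countableBasis X
  have hbc : b.Countable := countable_countableBasis X
  refine ⟨P, ((hbc.prod hbc).image _).mono (sep_subset _ _), ?_, fun x y hxy ↦ ?_⟩
  · rintro _ ⟨⟨⟨U, V⟩, -, rfl⟩, hUV⟩
    exact ⟨isClosed_closure, isClosed_closure, hUV⟩
  · obtain ⟨U, hxU, hU, V, hyV, hV, hUV⟩ := exists_open_nhds_disjoint_closure hxy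
    obtain ⟨U', hU', hxU', hU'U⟩ := hb.exists_subset_of_mem_open hxU hU
    obtain ⟨V', hV', hyV', hV'V⟩ := hb.exists_subset_of_mem_open hyV hV
    have hdisj : Disjoint (closure U') (closure V') :=
      hUV.mono (closure_mono hU'U) (closure_mono hV'V)
    exact ⟨(closure U', closure V'), ⟨⟨(U', V'), ⟨hU', hV'⟩, rfl⟩, hdisj⟩,
      subset_closure hxU', subset_closure hyV'⟩

theorem FullyClosed.countable_nontrivial_fibers {X Y : Type*} [TopologicalSpace X] [T25Space X]
    [SecondCountableTopology X] [TopologicalSpace Y] {f : X → Y} (hf : FullyClosed f) :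
    {y | (f ⁻¹' {y}).Nontrivial}.Countable := by
  obtain ⟨P, hPc, hP, hsep⟩ := exists_countable_disjoint_closed_pairs_separating X
  have hcover : {y | (f ⁻¹' {y}).Nontrivial} ⊆ ⋃ p ∈ P, f '' p.1 ∩ f '' p.2 := by
    rintro y ⟨a, ha, c, hc, hac⟩
    obtain ⟨p, hp, hap, hcp⟩ := hsep a c hac
    exact mem_biUnion hp ⟨⟨a, hap, ha⟩, ⟨c, hcp, hc⟩⟩
  refine (hPc.biUnion fun p hp ↦ ?_).mono hcover
  obtain ⟨hA, hB, hAB⟩ := hP p hp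
  exact (hf _ _ hA hB hAB).countable

theorem exists_continuousMap_injOn_of_isClosed {X : Type*} [TopologicalSpace X] [NormalSpace X]
    {S : Set X} (hS : IsClosed S) [MetrizableSpace S] [SeparableSpace S] :
    ∃ g : C(X, ℕ → unitInterval), InjOn g S := by
  let := metrizableSpaceMetric S
  obtain ⟨e, he⟩ := PiNatEmbed.exists_embedding_to_hilbert_cube (X := S)
  obtain ⟨g, hg⟩ := ContinuousMap.exists_restrict_eq hS ⟨e, he.continuous⟩
  have hge : S.domRestrict g = e := congrArg DFunLike.coe hg
  exact ⟨g, injOn_iff_injective.mpr (hge ▸ he.injective)⟩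

theorem metrizableSpace_of_countable_nontrivial_fibers {X Y : Type*} [TopologicalSpace X]
    [CompactSpace X] [T2Space X] [TopologicalSpace Y] [MetrizableSpace Y] {f : X → Y}
    (hf : Continuous f) (hcount : {y | (f ⁻¹' {y}).Nontrivial}.Countable)
    (hfib : ∀ y, (f ⁻¹' {y}).Nontrivial → MetrizableSpace (f ⁻¹' {y})) :
    MetrizableSpace X := by
  let N := {y | (f ⁻¹' {y}).Nontrivial}
  have : Countable N := hcount.to_subtype
  have hsep (y : N) : ∃ g : C(X, ℕ → unitInterval), InjOn g (f ⁻¹' {y.1}) := by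
    have hclosed : IsClosed (f ⁻¹' {y.1}) := isClosed_singleton.preimage hf
    have : CompactSpace (f ⁻¹' {y.1}) := isCompact_iff_compactSpace.mp hclosed.isCompact
    have := hfib y y.2
    exact exists_continuousMap_injOn_of_isClosed hclosed
  choose g hg using hsep
  let F (x : X) : Y × (N → ℕ → unitInterval) := (f x, fun y ↦ g y x)
  have hF : Continuous F := by fun_prop
  have hinj : Function.Injective F := by
    intro a c hac
    obtain ⟨hfac, hgac⟩ := Prod.ext_iff.mp hac
    by_contra hne
    have hy : (f ⁻¹' {f c}).Nontrivial := ⟨a, hfac, c, rfl, hne⟩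
    exact hne (hg ⟨f c, hy⟩ hfac rfl (congrFun hgac ⟨f c, hy⟩))
  exact (hF.isClosedEmbedding hinj).isEmbedding.metrizableSpace

theorem metrizable_iff_countably_many_nontrivial_fibers_general {X Y : Type*} [TopologicalSpace X]
    [CompactSpace X] [T2Space X] [TopologicalSpace Y] [MetrizableSpace Y]
    {f : X → Y} (hf : Continuous f) (hfc : FullyClosed f)
    (hfib : ∀ y : Y, MetrizableSpace (f ⁻¹' {y})) :
    MetrizableSpace X ↔ {y : Y | ¬ (f ⁻¹' {y}).Subsingleton}.Countable := by
  simp only [not_subsingleton_iff]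
  exact ⟨fun _ ↦ hfc.countable_nontrivial_fibers,
    fun hcount ↦ metrizableSpace_of_countable_nontrivial_fibers hf hcount fun y _ ↦ hfib y⟩

end

/-- Proposition 2.3: for a fully closed map onto a metrizable compact with
metrizable fibers, the total space is metrizable iff the set of nontrivial fibers is
countable. -/
theorem metrizable_iff_countably_many_nontrivial_fibers
    {X Y : Type*} [TopologicalSpace X] [CompactSpace X] [T2Space X]
    [TopologicalSpace Y] [CompactSpace Y] [T2Space Y] [TopologicalSpace.MetrizableSpace Y]
    (f : X → Y) (hf : Continuous f) (hsurj : Function.Surjective f)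
    (hfc : FullyClosed f)
    (hfib : ∀ y : Y, TopologicalSpace.MetrizableSpace (f ⁻¹' {y})) :
    TopologicalSpace.MetrizableSpace X ↔
      {y : Y | ¬ (f ⁻¹' {y}).Subsingleton}.Countable :=
  metrizable_iff_countably_many_nontrivial_fibers_general hf hfc hfib
end

section
/- Let f : X → Y be a fully closed continuous surjection of compact Hausdorff spaces. Then for every continuous real function h on X, the fiberwise oscillation Ω_f(h) belongs to c₀(Y); that is, for every ε > 0 the set {y ∈ Y : Ω_f(h)(y) ≥ ε} is finite. -/
/-!
Cover the range of `h` by finitely many balls `B(c, ε / 3)`. If a fibre contains `s`, `t` with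
`dist (h s) (h t) ≥ ε`, then for some centre `c` it meets both of the disjoint closed sets
`{dist (h ·) c ≤ ε / 3}` and `{dist (h ·) c ≥ 2 * ε / 3}`. Full closedness allows only finitely
many such fibres for each `c`.
-/

open Set Metric Topology Filter

/-- The fiberwise oscillation `Ω_f(h)(y) = diam (h '' (f⁻¹ {y}))`. -/
noncomputable def fiberOsc {X Y : Type*} [TopologicalSpace X]
    (f : X → Y) (h : C(X, ℝ)) (y : Y) : ℝ :=
  Metric.diam (h '' (f ⁻¹' {y}))

theorem exists_lt_dist_of_lt_diam {E : Type*} [PseudoMetricSpace E] {s : Set E} {r : ℝ}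
    (hr : 0 ≤ r) (hrs : r < diam s) : ∃ x ∈ s, ∃ y ∈ s, r < dist x y := by
  contrapose! hrs
  exact diam_le_of_forall_dist_le hr hrs

namespace FullyClosed

variable {X Y E : Type*} [TopologicalSpace X] [TopologicalSpace Y] {f : X → Y} {h : X → E}

theorem finite_image_preimage_inter_image_preimage [TopologicalSpace E] (hf : FullyClosed f)
    (hh : Continuous h) {C D : Set E} (hC : IsClosed C) (hD : IsClosed D) (hCD : Disjoint C D) :
    (f '' (h ⁻¹' C) ∩ f '' (h ⁻¹' D)).Finite :=
  hf _ _ (hC.preimage hh) (hD.preimage hh) (hCD.preimage h)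

theorem finite_setOf_exists_le_dist [PseudoMetricSpace E] (hf : FullyClosed f)
    (hh : Continuous h) (hrange : TotallyBounded (range h)) {ε : ℝ} (hε : 0 < ε) :
    {y | ∃ s ∈ f ⁻¹' {y}, ∃ t ∈ f ⁻¹' {y}, ε ≤ dist (h s) (h t)}.Finite := by
  obtain ⟨centers, hcenters, hcover⟩ := totallyBounded_iff.mp hrange (ε / 3) (by positivity)
  have finite_at (c : E) :
      (f '' (h ⁻¹' closedBall c (ε / 3)) ∩ f '' (h ⁻¹' (ball c (2 * ε / 3))ᶜ)).Finite :=
    hf.finite_image_preimage_inter_image_preimage hh isClosed_closedBall isOpen_ball.isClosed_compl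
      (disjoint_compl_right_iff_subset.mpr (closedBall_subset_ball (by linarith)))
  refine (hcenters.biUnion fun c _ ↦ finite_at c).subset ?_
  rintro y ⟨s, hs, t, ht, hst⟩
  obtain ⟨c, hc, hsc⟩ := mem_iUnion₂.mp (hcover (mem_range_self s))
  have ht_far : 2 * ε / 3 ≤ dist (h t) c := by
    linarith [dist_triangle_right (h s) (h t) c, mem_ball.mp hsc]
  exact mem_biUnion hc
    ⟨⟨s, ball_subset_closedBall hsc, hs⟩, ⟨t, fun htc ↦ ht_far.not_gt htc, ht⟩⟩

end FullyClosed

theorem fiberOsc_mem_c0_of_fullyClosed_general {X Y E : Type*} [TopologicalSpace X]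
    [TopologicalSpace Y] [PseudoMetricSpace E] {f : X → Y} (hf : FullyClosed f) {h : X → E}
    (hh : Continuous h) (hrange : TotallyBounded (range h)) {ε : ℝ} (hε : 0 < ε) :
    {y | ε ≤ diam (h '' (f ⁻¹' {y}))}.Finite := by
  refine (hf.finite_setOf_exists_le_dist hh hrange (half_pos hε)).subset fun y hy ↦ ?_
  obtain ⟨_, ⟨s, hs, rfl⟩, _, ⟨t, ht, rfl⟩, hst⟩ :=
    exists_lt_dist_of_lt_diam (half_pos hε).le ((half_lt_self hε).trans_le hy)
  exact ⟨s, hs, t, ht, hst.le⟩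

/-- Corollary 3.2: for a fully closed map `f`, the fiberwise oscillation of
any continuous function lies in `c₀(Y)`. -/
theorem fiberOsc_mem_c0_of_fullyClosed
    {X Y : Type*} [TopologicalSpace X] [CompactSpace X] [T2Space X]
    [TopologicalSpace Y] [CompactSpace Y] [T2Space Y]
    (f : X → Y) (hf : Continuous f) (hsurj : Function.Surjective f)
    (hfc : FullyClosed f) :
    ∀ (h : C(X, ℝ)) (ε : ℝ), 0 < ε → {y : Y | ε ≤ fiberOsc f h y}.Finite :=
  fun h _ hε ↦ fiberOsc_mem_c0_of_fullyClosed_general hfc h.continuous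
    (isCompact_range h.continuous).totallyBounded hε
end

section
/- Let f : X → Y be a fully closed continuous surjection of a compact Hausdorff space X onto a metrizable compact space Y such that every fiber f⁻¹(y) is metrizable. Then for every countable subset A ⊆ Y, the subspace Z_A of C(X) is separable in the supremum norm. -/
open Set Metric Topology Filter

/-!
By compactness, the functions in `C(X, E)` that factor through a given continuous map `Φ` from `X`
to a second countable Hausdorff space form a copy of `C(range Φ, E)`, which is separable. To find
such a `Φ` for `Z_A`, note that for each `y ∈ A` the fiber over `y` is second countable, so some
countable `D y ⊆ C(X, E)` separates all the points of the fiber that continuous functions on `X`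
can separate. Take `Φ` to be `f` together with all functions in `⋃ y, D y`: if `Φ x = Φ x'`, then
`x` and `x'` lie in one fiber, and a function in `Z_A` cannot tell them apart, either because it is
constant on that fiber or because the fiber lies over `A` and `D (f x)` does not separate them.
-/

theorem isSeparable_setOf_factorsThrough {X W E : Type*} [TopologicalSpace X] [CompactSpace X]
    [TopologicalSpace W] [T2Space W] [SecondCountableTopology W]
    [TopologicalSpace E] [SecondCountableTopology E] {Φ : X → W} (hΦ : Continuous Φ) :
    TopologicalSpace.IsSeparable {h : C(X, E) | Function.FactorsThrough h Φ} := by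
  have : CompactSpace (range Φ) := isCompact_iff_compactSpace.1 (isCompact_range hΦ)
  let q : C(X, range Φ) := ⟨rangeFactorization Φ, hΦ.rangeFactorization⟩
  have hq : IsQuotientMap q :=
    .of_surjective_continuous rangeFactorization_surjective q.continuous
  refine (TopologicalSpace.isSeparable_range (ContinuousMap.continuous_precomp q)).mono ?_
  intro h hh
  have hhq : Function.FactorsThrough h q := fun _ _ hx => hh (congrArg Subtype.val hx)
  exact ⟨hq.lift h hhq, hq.lift_comp h hhq⟩

theorem exists_countable_forall_factorsThrough {K E ι : Type*} [TopologicalSpace K]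
    [SecondCountableTopology K] [TopologicalSpace E] [T2Space E] (F : ι → C(K, E)) :
    ∃ D : Set ι, D.Countable ∧ ∀ i, Function.FactorsThrough (F i) fun x (j : D) => F j x := by
  obtain ⟨D, hD, hDF⟩ := TopologicalSpace.isOpen_iUnion_countable
    (fun i => {p : K × K | F i p.1 ≠ F i p.2})
    (fun i => isOpen_ne_fun ((F i).continuous.comp continuous_fst)
      ((F i).continuous.comp continuous_snd))
  refine ⟨D, hD, fun i x y hxy => ?_⟩
  by_contra hne
  have hmem : (x, y) ∈ ⋃ j ∈ D, {p : K × K | F j p.1 ≠ F j p.2} := hDF ▸ mem_iUnion.2 ⟨i, hne⟩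
  obtain ⟨j, hj, hjne⟩ := mem_iUnion₂.1 hmem
  exact hjne (congrFun hxy ⟨j, hj⟩)

theorem fiberOsc_eq_zero_iff {X Y : Type*} [TopologicalSpace X] [CompactSpace X]
    [TopologicalSpace Y] {f : X → Y} {h : C(X, ℝ)} {y : Y} :
    fiberOsc f h y = 0 ↔ (h '' (f ⁻¹' {y})).Subsingleton := by
  have hbdd : Bornology.IsBounded (h '' (f ⁻¹' {y})) :=
    (isCompact_range h.continuous).isBounded.subset (image_subset_range _ _)
  refine ⟨fun h0 a ha b hb => dist_le_zero.1 ?_, diam_subsingleton⟩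
  exact (dist_le_diam_of_mem hbdd ha hb).trans_eq h0

theorem ZA_separable_of_countable_general {X Y E : Type*} [TopologicalSpace X] [CompactSpace X]
    [TopologicalSpace Y] [T2Space Y] [SecondCountableTopology Y]
    [TopologicalSpace E] [T2Space E] [SecondCountableTopology E]
    {f : X → Y} (hf : Continuous f) {A : Set Y} (hA : A.Countable)
    (hfib : ∀ y ∈ A, SecondCountableTopology (f ⁻¹' {y})) :
    TopologicalSpace.IsSeparable
      {h : C(X, E) | ∀ y ∉ A, (h '' (f ⁻¹' {y})).Subsingleton} := by
  have : Countable A := hA.to_subtype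
  have (y : A) : SecondCountableTopology (f ⁻¹' {y.1}) := hfib y y.2
  choose D hD hDfactors using fun y : A =>
    exists_countable_forall_factorsThrough fun h : C(X, E) => h.restrict (f ⁻¹' {y.1})
  have : Countable (⋃ y, D y) := (countable_iUnion hD).to_subtype
  let Φ : X → Y × ((⋃ y, D y) → E) := fun x => (f x, fun g => g.1 x)
  have hΦ : Continuous Φ := hf.prodMk (continuous_pi fun g => g.1.continuous)
  refine (isSeparable_setOf_factorsThrough hΦ).mono fun h hh x x' hxx' => ?_
  obtain ⟨hfx, hgx⟩ : f x = f x' ∧ (fun g : ⋃ y, D y => g.1 x) = fun g => g.1 x' :=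
    Prod.mk.inj hxx'
  by_cases hx : f x ∈ A
  · have hDx : (fun g : D ⟨f x, hx⟩ => g.1 x) = fun g => g.1 x' :=
      funext fun g => congrFun hgx ⟨g, mem_iUnion_of_mem _ g.2⟩
    exact hDfactors ⟨f x, hx⟩ h (a := ⟨x, rfl⟩) (b := ⟨x', hfx.symm⟩) hDx
  · exact hh (f x) hx (mem_image_of_mem h rfl) (mem_image_of_mem h hfx.symm)

/-- for countable `A ⊆ Y` the subspace `Z_A` of `C(X)` is separable in the
supremum norm. -/
theorem ZA_separable_of_countable
    {X Y : Type*} [TopologicalSpace X] [CompactSpace X] [T2Space X]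
    [TopologicalSpace Y] [CompactSpace Y] [T2Space Y] [TopologicalSpace.MetrizableSpace Y]
    (f : X → Y) (hf : Continuous f) (hsurj : Function.Surjective f)
    (hfc : FullyClosed f)
    (hfib : ∀ y : Y, TopologicalSpace.MetrizableSpace (f ⁻¹' {y}))
    (A : Set Y) (hA : A.Countable) :
    TopologicalSpace.IsSeparable {h : C(X, ℝ) | ∀ y ∉ A, fiberOsc f h y = 0} := by
  have (y : Y) : CompactSpace (f ⁻¹' {y}) :=
    isCompact_iff_compactSpace.1 (isClosed_singleton.preimage hf).isCompact
  simpa only [fiberOsc_eq_zero_iff] using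
    ZA_separable_of_countable_general hf hA fun _ _ => inferInstance
end

section
/- ia Let f : X → Y be a fully closed continuous surjection of a compact Hausdorff space X onto a metrizable compact space Y with metrizable fibers f⁻¹(y), y ∈ Y. Let K be a finite subset of a countable set A ⊆ Y. Then for every h ∈ Z_A one has dist(h, Z_K) = inf{‖h − g‖_∞ : g ∈ Z_K} ≤ sup{Ω_f(h)(y) : y ∈ A∖K}. -/
open Set Metric Topology Filter

/-!
Collapse every fiber of `f` over a point outside `K`. Because `f` is fully closed, the quotient map
`p` is closed, so the quotient is compact and normal, and `Z_K` consists of the functions that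
factor through `p`. Each fiber of `p` has a neighborhood that `h` maps into a ball whose radius
barely exceeds half the oscillation of `h`. A partition of unity on the quotient glues the centers
of these balls into a function that factors through `p` and is close to `h`. The factor `1 / 2` is
optimal, since a perturbation of `h` by `r` changes its oscillations by at most `2 * r`.
-/

theorem exists_subset_closedBall_half_diam {S : Set ℝ} (hS : Bornology.IsBounded S) :
    ∃ c, S ⊆ closedBall c (diam S / 2) := by
  refine ⟨(sInf S + sSup S) / 2, hS.subset_Icc_sInf_sSup.trans_eq ?_⟩
  rw [Real.closedBall_eq_Icc, Real.diam_eq hS]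
  congr 1 <;> ring

theorem normalSpace_of_isClosedMap_s13 {X Y : Type*} [TopologicalSpace X] [TopologicalSpace Y]
    [NormalSpace X] {p : X → Y} (hp : Continuous p) (hsurj : p.Surjective) (hcl : IsClosedMap p) :
    NormalSpace Y where
  normal S T hS hT hST := by
    obtain ⟨U, V, hU, hV, hSU, hTV, hUV⟩ :=
      normal_separation (hS.preimage hp) (hT.preimage hp) (hST.preimage p)
    refine ⟨kernImage p U, kernImage p V, isClosedMap_iff_kernImage.1 hcl hU,
      isClosedMap_iff_kernImage.1 hcl hV, subset_kernImage_iff.2 hSU,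
      subset_kernImage_iff.2 hTV, disjoint_left.2 fun q hqU hqV => ?_⟩
    obtain ⟨x, rfl⟩ := hsurj q
    exact disjoint_left.1 hUV (hqU rfl) (hqV rfl)

section FiberOsc

variable {X Y : Type*} [TopologicalSpace X]

theorem fiberOsc_nonneg (f : X → Y) (h : C(X, ℝ)) (y : Y) : 0 ≤ fiberOsc f h y :=
  diam_nonneg

theorem sSup_image_fiberOsc_nonneg (f : X → Y) (h : C(X, ℝ)) (S : Set Y) :
    0 ≤ sSup (fiberOsc f h '' S) :=
  Real.sSup_nonneg (forall_mem_image.2 fun y _ => fiberOsc_nonneg f h y)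

theorem fiberOsc_eq_zero_of_forall_eq {f : X → Y} {g : C(X, ℝ)} {y : Y}
    (hg : ∀ x z, f x = y → f z = y → g x = g z) : fiberOsc f g y = 0 := by
  refine diam_subsingleton ?_
  rintro _ ⟨x, hx, rfl⟩ _ ⟨z, hz, rfl⟩
  exact hg x z hx hz

variable [CompactSpace X]

theorem isBounded_image_continuousMap (h : C(X, ℝ)) (S : Set X) :
    Bornology.IsBounded (h '' S) :=
  (isCompact_range h.continuous).isBounded.subset (image_subset_range h S)

theorem dist_le_fiberOsc (f : X → Y) (h : C(X, ℝ)) {x z : X} {y : Y} (hx : f x = y)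
    (hz : f z = y) : dist (h x) (h z) ≤ fiberOsc f h y :=
  dist_le_diam_of_mem (isBounded_image_continuousMap h _) (mem_image_of_mem h hx)
    (mem_image_of_mem h hz)

theorem bddAbove_image_fiberOsc (f : X → Y) (h : C(X, ℝ)) (S : Set Y) :
    BddAbove (fiberOsc f h '' S) := by
  refine ⟨diam (range h), ?_⟩
  rintro _ ⟨y, -, rfl⟩
  exact diam_mono (image_subset_range h _) (isCompact_range h.continuous).isBounded

theorem fiberOsc_le_add_two_mul_dist (f : X → Y) (g h : C(X, ℝ)) (y : Y) :
    fiberOsc f h y ≤ fiberOsc f g y + 2 * dist h g := by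
  have hg := fiberOsc_nonneg f g y
  refine diam_le_of_forall_dist_le (by positivity) ?_
  rintro _ ⟨x, hx, rfl⟩ _ ⟨z, hz, rfl⟩
  calc dist (h x) (h z)
      ≤ dist (h x) (g x) + dist (g x) (g z) + dist (g z) (h z) := dist_triangle4 _ _ _ _
    _ ≤ dist h g + fiberOsc f g y + dist h g := by
        gcongr
        · exact h.dist_apply_le_dist x
        · exact dist_le_fiberOsc f g hx hz
        · exact dist_comm (g z) (h z) ▸ h.dist_apply_le_dist z
    _ = fiberOsc f g y + 2 * dist h g := by ring

theorem exists_forall_dist_comp_lt_of_fiberOsc_le [NormalSpace X] [TopologicalSpace Y] (p : C(X, Y))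
    (hsurj : Function.Surjective p) (hcl : IsClosedMap p) (h : C(X, ℝ)) {s r : ℝ}
    (hs : ∀ y, fiberOsc p h y ≤ s) (hsr : s / 2 < r) :
    ∃ g : C(Y, ℝ), ∀ x, dist (h x) (g (p x)) < r := by
  have : NormalSpace Y := normalSpace_of_isClosedMap_s13 p.continuous hsurj hcl
  have : CompactSpace Y := hsurj.compactSpace p.continuous
  have locally_const : ∀ y, ∃ c : ℝ, ∀ᶠ y' in 𝓝 y, c ∈ ⋂ x ∈ p ⁻¹' {y'}, ball (h x) r := by
    intro y
    obtain ⟨c, hc⟩ := exists_subset_closedBall_half_diam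
      (isBounded_image_continuousMap h (p ⁻¹' {y}))
    have near_fiber : ∀ x ∈ p ⁻¹' {y}, ∀ᶠ x' in 𝓝 x, h x' ∈ ball c r := fun x hx =>
      h.continuous.continuousAt.eventually <| isOpen_ball.mem_nhds <|
        closedBall_subset_ball ((div_le_div_of_nonneg_right (hs y) zero_le_two).trans_lt hsr)
          (hc (mem_image_of_mem h hx))
    refine ⟨c, ?_⟩
    filter_upwards [hcl.eventually_nhds_fiber y near_fiber] with y' hy'
    exact mem_iInter₂.2 fun x hx => mem_ball_comm.1 (hy' x hx)
  obtain ⟨g, hg⟩ := exists_continuous_forall_mem_convex_of_local_const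
    (fun y => convex_iInter₂ fun x _ => convex_ball (h x) r) locally_const
  exact ⟨g, fun x => mem_ball'.1 (mem_iInter₂.1 (hg (p x)) x rfl)⟩

end FiberOsc

section Collapse

variable {X Y : Type*}

/-- The equivalence relation on `X` whose quotient map collapses each fiber of `f` over a point
outside `K` to a point, and is injective over `K`. -/
def fiberCollapse (f : X → Y) (K : Set Y) : Setoid X where
  r x z := x = z ∨ f x = f z ∧ f x ∉ K
  iseqv :=
    { refl := fun _ => Or.inl rfl
      symm := by grind
      trans := by grind }

theorem mk_fiberCollapse_eq_iff {f : X → Y} {K : Set Y} {x z : X} :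
    (Quotient.mk (fiberCollapse f K) x = Quotient.mk _ z) ↔ x = z ∨ f x = f z ∧ f x ∉ K :=
  Quotient.eq

theorem mk_fiberCollapse_preimage_image (f : X → Y) (K : Set Y) (C : Set X) :
    Quotient.mk (fiberCollapse f K) ⁻¹' (Quotient.mk (fiberCollapse f K) '' C) =
      C ∪ f ⁻¹' (f '' C \ K) := by
  ext x
  simp only [mem_preimage, mem_image, mk_fiberCollapse_eq_iff, mem_union, Set.mem_sdiff]
  grind

variable [TopologicalSpace X]

theorem fiberOsc_mk_fiberCollapse_of_mem {f : X → Y} {K : Set Y} (h : C(X, ℝ)) {x : X}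
    (hx : f x ∈ K) : fiberOsc (Quotient.mk (fiberCollapse f K)) h (Quotient.mk _ x) = 0 := by
  have fiber_eq : Quotient.mk (fiberCollapse f K) ⁻¹' {Quotient.mk _ x} = {x} := by
    ext z
    simp only [mem_preimage, mem_singleton_iff, mk_fiberCollapse_eq_iff]
    grind
  rw [fiberOsc, fiber_eq, image_singleton, diam_singleton]

theorem fiberOsc_mk_fiberCollapse_of_notMem {f : X → Y} {K : Set Y} (h : C(X, ℝ)) {x : X}
    (hx : f x ∉ K) :
    fiberOsc (Quotient.mk (fiberCollapse f K)) h (Quotient.mk _ x) = fiberOsc f h (f x) := by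
  have fiber_eq : Quotient.mk (fiberCollapse f K) ⁻¹' {Quotient.mk _ x} = f ⁻¹' {f x} := by
    ext z
    simp only [mem_preimage, mem_singleton_iff, mk_fiberCollapse_eq_iff]
    grind
  rw [fiberOsc, fiber_eq, fiberOsc]

variable [TopologicalSpace Y]

theorem FullyClosed.isClosed_union_preimage_image_diff [RegularSpace X] [T1Space Y] {f : X → Y}
    (hfc : FullyClosed f) (hf : Continuous f) (hcl : IsClosedMap f) {C : Set X} (hC : IsClosed C)
    (K : Set Y) : IsClosed (C ∪ f ⁻¹' (f '' C \ K)) := by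
  rw [← isOpen_compl_iff, isOpen_iff_eventually]
  intro x hx
  have hxC : ∀ᶠ z in 𝓝 x, z ∉ C := hC.isOpen_compl.mem_nhds fun h => hx (Or.inl h)
  by_cases hxK : f x ∈ K
  · obtain ⟨V, hV, hVcl, hVC⟩ := exists_mem_nhds_isClosed_subset hxC
    -- Full closedness leaves finitely many fibers meeting both `V` and `C`. All of them but the
    -- fiber through `x`, which is not collapsed, stay away from `x`.
    have hfin : ((f '' V ∩ f '' C) \ {f x}).Finite :=
      (hfc V C hVcl hC (disjoint_left.2 fun _ hz => hVC hz)).subset sdiff_subset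
    have havoid : ∀ᶠ z in 𝓝 x, f z ∉ (f '' V ∩ f '' C) \ {f x} :=
      hf.continuousAt.eventually (hfin.isClosed.isOpen_compl.mem_nhds (by simp))
    filter_upwards [hxC, hV, havoid] with z hzC hzV hz
    have := mem_image_of_mem f hzV
    grind
  · have hximage : ∀ᶠ z in 𝓝 x, f z ∉ f '' C :=
      hf.continuousAt.eventually ((hcl C hC).isOpen_compl.mem_nhds (by grind))
    filter_upwards [hxC, hximage] with z hzC hz
    grind

theorem FullyClosed.isClosedMap_mk_fiberCollapse [RegularSpace X] [T1Space Y] {f : X → Y}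
    (hfc : FullyClosed f) (hf : Continuous f) (hcl : IsClosedMap f) (K : Set Y) :
    IsClosedMap (Quotient.mk (fiberCollapse f K)) := fun C hC => by
  have saturation_closed :
      IsClosed (Quotient.mk (fiberCollapse f K) ⁻¹' (Quotient.mk (fiberCollapse f K) '' C)) := by
    rw [mk_fiberCollapse_preimage_image]
    exact hfc.isClosed_union_preimage_image_diff hf hcl hC K
  exact isQuotientMap_quotient_mk'.isClosed_preimage.1 saturation_closed

end Collapse

section Distance

variable {X Y : Type*} [TopologicalSpace X] [CompactSpace X]

theorem half_sSup_fiberOsc_le_infDist (f : X → Y) (h : C(X, ℝ)) {S K : Set Y}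
    (hSK : Disjoint S K) :
    sSup (fiberOsc f h '' S) / 2 ≤ infDist h {g : C(X, ℝ) | ∀ y ∉ K, fiberOsc f g y = 0} := by
  have zero_mem : (0 : C(X, ℝ)) ∈ {g : C(X, ℝ) | ∀ y ∉ K, fiberOsc f g y = 0} :=
    fun _ _ => fiberOsc_eq_zero_of_forall_eq fun _ _ _ _ => rfl
  refine (le_infDist ⟨0, zero_mem⟩).2 fun g hg => ?_
  rw [div_le_iff₀' two_pos]
  refine Real.sSup_le ?_ (by positivity)
  rintro _ ⟨y, hy, rfl⟩
  simpa only [hg y (disjoint_left.1 hSK hy), zero_add] using fiberOsc_le_add_two_mul_dist f g h y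

theorem FullyClosed.infDist_le_half_of_fiberOsc_le [R1Space X] [TopologicalSpace Y] [T2Space Y]
    {f : X → Y} (hfc : FullyClosed f) (hf : Continuous f) {K : Set Y} {h : C(X, ℝ)} {s : ℝ}
    (hs : 0 ≤ s) (hosc : ∀ y ∉ K, fiberOsc f h y ≤ s) :
    infDist h {g : C(X, ℝ) | ∀ y ∉ K, fiberOsc f g y = 0} ≤ s / 2 := by
  let p : C(X, Quotient (fiberCollapse f K)) := ⟨Quotient.mk _, continuous_quotient_mk'⟩
  have hp : ∀ q, fiberOsc p h q ≤ s := by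
    refine Quotient.ind fun x => ?_
    by_cases hx : f x ∈ K
    · exact (fiberOsc_mk_fiberCollapse_of_mem h hx).trans_le hs
    · exact (fiberOsc_mk_fiberCollapse_of_notMem h hx).trans_le (hosc _ hx)
  refine le_of_forall_gt_imp_ge_of_dense fun r hr => ?_
  obtain ⟨g, hg⟩ := exists_forall_dist_comp_lt_of_fiberOsc_le p Quotient.mk_surjective
    (hfc.isClosedMap_mk_fiberCollapse hf hf.isClosedMap K) h hp hr
  have hgK : ∀ y ∉ K, fiberOsc f (g.comp p) y = 0 := fun y hy =>
    fiberOsc_eq_zero_of_forall_eq fun x z hx hz =>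
      congrArg g (mk_fiberCollapse_eq_iff.2 (Or.inr ⟨hx.trans hz.symm, hx ▸ hy⟩))
  calc infDist h {g : C(X, ℝ) | ∀ y ∉ K, fiberOsc f g y = 0}
      ≤ dist h (g.comp p) := infDist_le_dist_of_mem hgK
    _ ≤ r := (ContinuousMap.dist_le (by linarith)).2 fun x => (hg x).le

end Distance

theorem dist_to_ZK_le_sup_osc_general {X Y : Type*} [TopologicalSpace X] [CompactSpace X]
    [R1Space X] [TopologicalSpace Y] [T2Space Y] {f : X → Y} (hf : Continuous f)
    (hfc : FullyClosed f) {A : Set Y} (K : Set Y) {h : C(X, ℝ)}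
    (hh : ∀ y ∉ A, fiberOsc f h y = 0) :
    infDist h {g : C(X, ℝ) | ∀ y ∉ K, fiberOsc f g y = 0} =
      sSup (fiberOsc f h '' (A \ K)) / 2 := by
  have hsup := sSup_image_fiberOsc_nonneg f h (A \ K)
  have hosc : ∀ y ∉ K, fiberOsc f h y ≤ sSup (fiberOsc f h '' (A \ K)) := fun y hyK => by
    by_cases hyA : y ∈ A
    · exact le_csSup (bddAbove_image_fiberOsc f h _) (mem_image_of_mem _ ⟨hyA, hyK⟩)
    · exact (hh y hyA).trans_le hsup
  exact le_antisymm (hfc.infDist_le_half_of_fiberOsc_le hf hsup hosc)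
    (half_sSup_fiberOsc_le_infDist f h disjoint_sdiff_left)

/-- Proposition 3.4: for a finite subset `K` of a countable set `A ⊆ Y`
and `h ∈ Z_A`, the distance from `h` to `Z_K` is at most `sup {Ω_f(h)(y) : y ∈ A \ K}`. -/
theorem dist_to_ZK_le_sup_osc
    {X Y : Type*} [TopologicalSpace X] [CompactSpace X] [T2Space X]
    [TopologicalSpace Y] [CompactSpace Y] [T2Space Y] [TopologicalSpace.MetrizableSpace Y]
    (f : X → Y) (hf : Continuous f) (hsurj : Function.Surjective f)
    (hfc : FullyClosed f)
    (hfib : ∀ y : Y, TopologicalSpace.MetrizableSpace (f ⁻¹' {y}))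
    (A : Set Y) (hA : A.Countable) (K : Set Y) (hK : K.Finite) (hKA : K ⊆ A)
    (h : C(X, ℝ)) (hh : ∀ y ∉ A, fiberOsc f h y = 0) :
    Metric.infDist h {g : C(X, ℝ) | ∀ y ∉ K, fiberOsc f g y = 0} ≤
      sSup (fiberOsc f h '' (A \ K)) :=
  (dist_to_ZK_le_sup_osc_general hf hfc K hh).trans_le
    (half_le_self (sSup_image_fiberOsc_nonneg f h _))
end

section
/- Let L = [0,1] × [0,1] be the lexicographic square, i.e., the unit square with the order topology of the lexicographic order. Then the projection π : L → [0,1] onto the first factor is a continuous fully closed surjection onto the compact metric space [0,1], and every fiber π⁻¹(y), y ∈ [0,1], is metrizable. -/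
open Set Metric Topology Filter

/-- The unit interval `[0,1]` as a subtype of `ℝ`. -/
abbrev UnitInt := Set.Icc (0 : ℝ) 1

/-- The lexicographic square `[0,1] ×ₗ [0,1]` carries the order topology of the
lexicographic order. -/
instance : TopologicalSpace (Lex (UnitInt × UnitInt)) := Preorder.topology _

instance : OrderTopology (Lex (UnitInt × UnitInt)) := ⟨rfl⟩

/-! If a map `f : X → Y` of linear orders has a lower adjoint `l` and an upper adjoint `u`, then the
points of `X` whose image approaches `y` strictly from above approach `u y`, and those whose image
approaches `y` strictly from below approach `l y`. Hence if `Y` is compact, `A` and `B` are closed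
and `f '' A ∩ f '' B` is infinite, then `l y` or `u y` lies in both `A` and `B`, where `y` is an
accumulation point of the intersection. For the lexicographic projection the adjoints send `y` to
the endpoints `(y, ⊥)` and `(y, ⊤)` of its fiber. -/

theorem mem_of_frequently_mem_image {X Y : Type*} [TopologicalSpace X] {f : X → Y}
    {F : Filter Y} {x : X} {A : Set X} (hA : IsClosed A) (hF : comap f F ≤ 𝓝 x)
    (h : ∃ᶠ y in F, y ∈ f '' A) : x ∈ A := by
  have hA' : ∃ᶠ a in comap f F, a ∈ A :=
    frequently_comap.2 (h.mono fun _ ⟨a, ha, hfa⟩ => ⟨a, hfa, ha⟩)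
  exact (hA'.filter_mono hF).mem_of_closed hA

section GaloisConnection

variable {X Y : Type*} [LinearOrder X] [TopologicalSpace X]
  [LinearOrder Y] [TopologicalSpace Y] {f : X → Y} {l u : Y → X}

theorem continuous_of_galoisConnection [OrderClosedTopology X] [OrderTopology Y]
    (hl : GaloisConnection l f) (hu : GaloisConnection f u) : Continuous f := by
  refine OrderTopology.continuous_iff.2 fun y => ⟨?_, ?_⟩
  · have : f ⁻¹' Ioi y = Ioi (u y) := Set.ext fun _ => hu.lt_iff_lt
    exact this ▸ isOpen_Ioi
  · have : f ⁻¹' Iio y = Iio (l y) := Set.ext fun _ => hl.lt_iff_lt.symm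
    exact this ▸ isOpen_Iio

theorem comap_nhdsGT_le_of_galoisConnection [OrderTopology X] [OrderClosedTopology Y]
    (hu : GaloisConnection f u) (y : Y) : comap f (𝓝[>] y) ≤ 𝓝 (u y) := by
  refine tendsto_id'.1 (tendsto_order.2 ⟨fun a ha => ?_, fun b hb => ?_⟩)
  · filter_upwards [preimage_mem_comap self_mem_nhdsWithin] with x hx
    exact ha.trans (hu.lt_iff_lt.1 hx)
  · filter_upwards [preimage_mem_comap (Ioo_mem_nhdsGT (hu.lt_iff_lt.2 hb))] with x hx
    exact hu.monotone_l.reflect_lt hx.2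

theorem comap_nhdsLT_le_of_galoisConnection [OrderTopology X] [OrderClosedTopology Y]
    (hl : GaloisConnection l f) (y : Y) : comap f (𝓝[<] y) ≤ 𝓝 (l y) :=
  comap_nhdsGT_le_of_galoisConnection (X := Xᵒᵈ) (Y := Yᵒᵈ) hl.dual (OrderDual.toDual y)

theorem fullyClosed_of_galoisConnection [OrderTopology X] [OrderClosedTopology Y]
    [CompactSpace Y] (hl : GaloisConnection l f) (hu : GaloisConnection f u) :
    FullyClosed f := by
  intro A B hA hB hAB
  have not_frequently {F : Filter Y} {x : X} (hF : comap f F ≤ 𝓝 x) :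
      ¬ ∃ᶠ y in F, y ∈ f '' A ∩ f '' B := fun h =>
    hAB.notMem_of_mem_left
      (mem_of_frequently_mem_image hA hF (h.mono fun _ hy => hy.1))
      (mem_of_frequently_mem_image hB hF (h.mono fun _ hy => hy.2))
  by_contra hinf
  obtain ⟨y, hy⟩ := Set.Infinite.exists_accPt_principal hinf
  rw [accPt_iff_frequently_nhdsNE, ← nhdsLT_sup_nhdsGT, frequently_sup] at hy
  exact hy.elim (not_frequently (comap_nhdsLT_le_of_galoisConnection hl y))
    (not_frequently (comap_nhdsGT_le_of_galoisConnection hu y))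

end GaloisConnection

section Lex

variable {α β : Type*}

theorem gc_toLex_bot_fst [PartialOrder α] [Preorder β] [OrderBot β] :
    GaloisConnection (fun a => toLex (a, ⊥)) (fun p : α ×ₗ β => (ofLex p).1) := fun a p => by
  simp [Prod.Lex.le_iff']

theorem gc_fst_toLex_top [PartialOrder α] [Preorder β] [OrderTop β] :
    GaloisConnection (fun p : α ×ₗ β => (ofLex p).1) (fun a => toLex (a, ⊤)) := fun p a => by
  simp [Prod.Lex.le_iff']

theorem strictMono_toLex_prodMk [Preorder α] [Preorder β] (a : α) :
    StrictMono fun b : β => toLex (a, b) := fun _ _ h =>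
  Prod.Lex.toLex_lt_toLex.2 (Or.inr ⟨rfl, h⟩)

theorem range_toLex_prodMk (a : α) :
    range (fun b : β => toLex (a, b)) = (fun p : α ×ₗ β => (ofLex p).1) ⁻¹' {a} := by
  ext p
  exact ⟨by rintro ⟨b, rfl⟩; rfl, by rintro rfl; exact ⟨(ofLex p).2, rfl⟩⟩

variable [LinearOrder α] [LinearOrder β] [TopologicalSpace β] [OrderTopology β]
  [TopologicalSpace (α ×ₗ β)] [OrderTopology (α ×ₗ β)]

theorem isEmbedding_toLex_prodMk (a : α) : IsEmbedding fun b : β => toLex (a, b) := by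
  refine (strictMono_toLex_prodMk a).isEmbedding_of_ordConnected ?_
  rw [range_toLex_prodMk]
  exact ordConnected_singleton.preimage_mono Prod.Lex.monotone_fst_ofLex

theorem metrizableSpace_fst_fiber [TopologicalSpace.MetrizableSpace β] (a : α) :
    TopologicalSpace.MetrizableSpace ((fun p : α ×ₗ β => (ofLex p).1) ⁻¹' {a}) := by
  rw [← range_toLex_prodMk]
  exact (isEmbedding_toLex_prodMk a).toHomeomorph.symm.isEmbedding.metrizableSpace

theorem lex_square_projection_fullyClosed_general [BoundedOrder β] [TopologicalSpace α]
    [OrderTopology α] [CompactSpace α] [TopologicalSpace.MetrizableSpace β] :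
    Continuous (fun p : α ×ₗ β => (ofLex p).1) ∧
    Function.Surjective (fun p : α ×ₗ β => (ofLex p).1) ∧
    FullyClosed (fun p : α ×ₗ β => (ofLex p).1) ∧
    ∀ a : α, TopologicalSpace.MetrizableSpace ((fun p : α ×ₗ β => (ofLex p).1) ⁻¹' {a}) :=
  ⟨continuous_of_galoisConnection gc_toLex_bot_fst gc_fst_toLex_top,
    fun a => ⟨toLex (a, ⊥), rfl⟩,
    fullyClosed_of_galoisConnection gc_toLex_bot_fst gc_fst_toLex_top,
    metrizableSpace_fst_fiber⟩

end Lex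

/-- the first-coordinate projection of the lexicographic square is a
continuous fully closed surjection onto `[0,1]`, with all fibers metrizable. -/
theorem lex_square_projection_fullyClosed :
    Continuous (fun p : Lex (UnitInt × UnitInt) => (ofLex p).1) ∧
    Function.Surjective (fun p : Lex (UnitInt × UnitInt) => (ofLex p).1) ∧
    FullyClosed (fun p : Lex (UnitInt × UnitInt) => (ofLex p).1) ∧
    ∀ y : UnitInt,
      TopologicalSpace.MetrizableSpace
        ((fun p : Lex (UnitInt × UnitInt) => (ofLex p).1) ⁻¹' {y}) :=
  lex_square_projection_fullyClosed_general
end
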